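/- Let 2 ≤ n₁, n₁ + 2 ≤ n₂ ≤ m, and let V be a dissipative quadratic stochastic operator on S^{m-1} with coefficients p_{ij,k} such that p_{k+1,k+1,k} = 1 for all k ∈ {1,…,n₁−1} ∪ {n₁+1,…,n₂−1}, p_{11,n₁} = 1, p_{n₁+1,n₁+1,n₂} = 1, and for every k with n₂+1 ≤ k ≤ m there is no i with p_{ii,k} = 1. Then the set of fixed points of V equals {x ∈ S^{m-1} : x₁ = ⋯ = x_{n₁}, x_{n₁+1} = ⋯ = x_{n₂}, and x_i = 0 for all i > n₂}; in particular V has infinitely many fixed points. -/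

import Mathlib

open Finset Filter Topology

/-- `Majorizes y x` means `x ≺ y`: for every `k`, the sum of the `k` largest components of
`x` is at most the sum of the `k` largest components of `y`.  This is expressed via the
standard equivalent form: every subset-sum of `x` is dominated by some subset-sum of `y`
over a subset of the same cardinality (the maximum of the latter over subsets of
cardinality `k` being exactly the sum of the `k` largest components of `y`). -/
def Majorizes {m : ℕ} (y x : Fin m → ℝ) : Prop :=
  ∀ A : Finset (Fin m), ∃ B : Finset (Fin m),
    B.card = A.card ∧ ∑ i ∈ A, x i ≤ ∑ i ∈ B, y i

/-- The quadratic operator `(Vx)_k = ∑_{i,j} p_{ij,k} x_i x_j` with heredity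
coefficients `p`. -/
def QSO {m : ℕ} (p : Fin m → Fin m → Fin m → ℝ) (x : Fin m → ℝ) : Fin m → ℝ :=
  fun k => ∑ i, ∑ j, p i j k * x i * x j

/-- Conditions on heredity coefficients: symmetry, nonnegativity, stochasticity. -/
def IsQSOCoeff {m : ℕ} (p : Fin m → Fin m → Fin m → ℝ) : Prop :=
  (∀ i j k, p i j k = p j i k) ∧ (∀ i j k, 0 ≤ p i j k) ∧ (∀ i j, ∑ k, p i j k = 1)

/-- Dissipativity of the q.s.o.: `V x ≻ x` for every `x` in the simplex. -/
def IsDissipative {m : ℕ} (p : Fin m → Fin m → Fin m → ℝ) : Prop :=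
  ∀ x ∈ stdSimplex ℝ (Fin m), Majorizes (QSO p x) x

/-- The `k`-th vertex of the simplex (the `k`-th standard basis vector). -/
def vertex {m : ℕ} (k : Fin m) : Fin m → ℝ := fun j => if j = k then 1 else 0

/-- The ω-limit set of the trajectory of `x` under `V`: the set of all limit points of
the sequence `(Vⁿ x)ₙ`. -/
def omegaLimitSet {m : ℕ} (V : (Fin m → ℝ) → Fin m → ℝ) (x : Fin m → ℝ) :
    Set (Fin m → ℝ) :=
  {y | ∃ φ : ℕ → ℕ, StrictMono φ ∧ Tendsto (fun n => V^[φ n] x) atTop (𝓝 y)}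

/-! Testing dissipativity at the vertices shows that `V` maps each `e_i` to some vertex `e_{f i}`,
and testing it at `(1 - t) e_i + t e_j` as `t → 0` gives `1/2 ≤ p_{ij,f i}`.  Let `R` contain the
range of `f`, with `f` injective on `R`.  For `i, j ∈ R` the two bounds `1/2` force
`p_{ij,·}` to be the average of the Dirac masses at `f i` and `f j`, so on the face spanned by `R`
the operator merely permutes coordinates along `f`.  Every pair `(i, j)` sends at least half of its
mass to `R`, so the mass `W` of a fixed point on `R` satisfies `W ≥ (1 + W²) / 2`, that is `W = 1`.
Hence the fixed points are the distributions on `R` that are constant along the cycles of `f`. -/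

section Coefficients

variable {m : ℕ} {p : Fin m → Fin m → Fin m → ℝ}

lemma QSO_single (i k : Fin m) : QSO p (Pi.single i 1) k = p i i k := by
  simp [QSO, Pi.single_apply]

lemma QSO_single_add_single (hsymm : ∀ i j k, p i j k = p j i k) (i j k : Fin m) (a b : ℝ) :
    QSO p (Pi.single i a + Pi.single j b) k =
      a ^ 2 * p i i k + 2 * a * b * p i j k + b ^ 2 * p j j k := by
  simp only [QSO, Pi.add_apply, Pi.single_apply, mul_add, add_mul, mul_ite, ite_mul, mul_zero,
    zero_mul, sum_add_distrib, sum_ite_eq', mem_univ, if_true, hsymm j i k]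
  ring

lemma sum_QSO (s : Finset (Fin m)) (x : Fin m → ℝ) :
    ∑ k ∈ s, QSO p x k = ∑ i, ∑ j, (∑ k ∈ s, p i j k) * (x i * x j) := by
  simp only [QSO, sum_mul, mul_assoc]
  rw [sum_comm]
  exact sum_congr rfl fun i _ => sum_comm

lemma IsQSOCoeff.le_one (hp : IsQSOCoeff p) (i j k : Fin m) : p i j k ≤ 1 :=
  hp.2.2 i j ▸ single_le_sum (fun l _ => hp.2.1 i j l) (mem_univ k)

lemma IsQSOCoeff.eq_zero_of_eq_one (hp : IsQSOCoeff p) {i j k l : Fin m} (hk : p i j k = 1)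
    (hlk : l ≠ k) : p i j l = 0 := by
  have hsum : p i j l + p i j k ≤ 1 := by
    rw [← hp.2.2 i j, ← sum_pair hlk]
    exact sum_le_univ_sum_of_nonneg (hp.2.1 i j)
  linarith [hp.2.1 i j l]

end Coefficients

section Dissipative

variable {m : ℕ} {p : Fin m → Fin m → Fin m → ℝ}

lemma single_add_single_mem_stdSimplex (i j : Fin m) {t : ℝ} (h0 : 0 ≤ t) (h1 : t ≤ 1) :
    (Pi.single i (1 - t) + Pi.single j t : Fin m → ℝ) ∈ stdSimplex ℝ (Fin m) := by
  have h := convex_stdSimplex ℝ (Fin m) (single_mem_stdSimplex ℝ i) (single_mem_stdSimplex ℝ j)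
    (sub_nonneg.mpr h1) h0 (sub_add_cancel 1 t)
  simpa only [← Pi.single_smul, smul_eq_mul, mul_one] using h

lemma Majorizes.exists_le {x y : Fin m → ℝ} (h : Majorizes y x) (i : Fin m) :
    ∃ k, x i ≤ y k := by
  obtain ⟨B, hB, hle⟩ := h {i}
  obtain ⟨k, rfl⟩ := card_eq_one.mp (hB.trans (card_singleton i))
  exact ⟨k, by simpa only [sum_singleton] using hle⟩

/-- `f` is a diagonal map of the operator with coefficients `p` if the operator sends the vertex
`e_i` of the simplex to the vertex `e_{f i}`, for every `i`.  Fixed points of a dissipative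
operator are described in terms of such a map. -/
def IsDiagonalMap (p : Fin m → Fin m → Fin m → ℝ) (f : Fin m → Fin m) : Prop :=
  ∀ i, p i i (f i) = 1

lemma IsDissipative.exists_isDiagonalMap (hp : IsQSOCoeff p) (hd : IsDissipative p) :
    ∃ f, IsDiagonalMap p f := by
  have hvertex (i : Fin m) : ∃ k, p i i k = 1 := by
    obtain ⟨k, hk⟩ := (hd _ (single_mem_stdSimplex ℝ i)).exists_le i
    rw [QSO_single, Pi.single_eq_same] at hk
    exact ⟨k, (hp.le_one i i k).antisymm hk⟩
  exact Classical.axiomOfChoice hvertex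

lemma IsDiagonalMap.eq_of_coeff_eq_one (hp : IsQSOCoeff p) {f : Fin m → Fin m}
    (hf : IsDiagonalMap p f) {i k : Fin m} (hk : p i i k = 1) : f i = k := by
  by_contra hne
  exact one_ne_zero ((hf i).symm.trans (hp.eq_zero_of_eq_one hk hne))

-- At `(1 - t) e_i + t e_j` only the coordinate `k` of the image can reach `1 - t`.
lemma IsDissipative.half_sub_le (hp : IsQSOCoeff p) (hd : IsDissipative p) {i j k : Fin m}
    (hij : i ≠ j) (hk : p i i k = 1) {t : ℝ} (ht0 : 0 < t) (ht : t ≤ 1 / 4) :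
    1 / 2 - t ≤ p i j k := by
  obtain ⟨l, hl⟩ := (hd _ (single_add_single_mem_stdSimplex i j ht0.le (by linarith))).exists_le i
  rw [QSO_single_add_single hp.1, Pi.add_apply, Pi.single_eq_same, Pi.single_eq_of_ne hij,
    add_zero] at hl
  have hjj : t ^ 2 * p j j l ≤ t ^ 2 := mul_le_of_le_one_right (sq_nonneg t) (hp.le_one j j l)
  obtain rfl | hlk := eq_or_ne l k
  · rw [hk] at hl
    have hscaled : t * (1 - 2 * t) ≤ t * (2 * (1 - t) * p i j l) := by linarith
    have hlower : 1 - 2 * t ≤ 2 * (1 - t) * p i j l := le_of_mul_le_mul_left hscaled ht0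
    linarith [mul_nonneg ht0.le (hp.2.1 i j l)]
  · rw [hp.eq_zero_of_eq_one hk hlk] at hl
    have hupper : 2 * (1 - t) * t * p i j l ≤ 2 * (1 - t) * t :=
      mul_le_of_le_one_right (by nlinarith) (hp.le_one i j l)
    nlinarith

lemma IsDissipative.half_le (hp : IsQSOCoeff p) (hd : IsDissipative p) {i k : Fin m}
    (hk : p i i k = 1) (j : Fin m) : 1 / 2 ≤ p i j k := by
  obtain rfl | hij := eq_or_ne i j
  · norm_num [hk]
  · refine le_of_forall_pos_le_add fun ε hε => ?_
    have h := hd.half_sub_le hp hij hk (lt_min hε (by norm_num)) (min_le_right ε (1 / 4))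
    linarith [min_le_left ε (1 / 4)]

end Dissipative

section DiagonalMap

variable {m : ℕ} {p : Fin m → Fin m → Fin m → ℝ} {f : Fin m → Fin m} {R : Finset (Fin m)}
  {x : Fin m → ℝ}

lemma IsDiagonalMap.coeff_eq (hp : IsQSOCoeff p) (hd : IsDissipative p) (hf : IsDiagonalMap p f)
    {i j : Fin m} (hij : f i = f j → i = j) (k : Fin m) :
    p i j k = ((if f i = k then 1 else 0) + if f j = k then 1 else 0) / 2 := by
  have hle (l : Fin m) :
      ((if f i = l then 1 else 0) + if f j = l then 1 else 0) / 2 ≤ p i j l := by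
    split_ifs with hi hj hj
    · obtain rfl := hij (hi.trans hj.symm)
      rw [← hi, hf]
      norm_num
    · simpa [← hi] using hd.half_le hp (hf i) j
    · simpa [← hj, hp.1 i j] using hd.half_le hp (hf j) i
    · simpa using hp.2.1 i j l
  -- Both sides are probability vectors in `k`, so the inequality is an equality.
  refine ((sum_eq_sum_iff_of_le fun l _ => hle l).mp ?_ k (mem_univ k)).symm
  rw [hp.2.2, ← sum_div, sum_add_distrib]
  norm_num

lemma IsDiagonalMap.half_add_le_sum_coeff (hp : IsQSOCoeff p) (hd : IsDissipative p)
    (hf : IsDiagonalMap p f) (hR : ∀ i, f i ∈ R) (hinj : Set.InjOn f R) (i j : Fin m) :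
    (1 + (if i ∈ R then 1 else 0) * if j ∈ R then 1 else 0) / 2 ≤ ∑ k ∈ R, p i j k := by
  by_cases hij : i ∈ R ∧ j ∈ R
  · simp only [hf.coeff_eq hp hd (hinj hij.1 hij.2), ← sum_div, sum_add_distrib, sum_ite_eq, hR,
      hij, if_true]
    norm_num
  · calc (1 + (if i ∈ R then 1 else 0) * if j ∈ R then 1 else 0) / 2 = (1 / 2 : ℝ) := by
          rw [ite_zero_mul_ite_zero, if_neg hij, add_zero]
      _ ≤ p i j (f i) := hd.half_le hp (hf i) j
      _ ≤ ∑ k ∈ R, p i j k := single_le_sum (fun k _ => hp.2.1 i j k) (hR i)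

lemma IsDiagonalMap.sum_eq_one_of_fixed (hp : IsQSOCoeff p) (hd : IsDissipative p)
    (hf : IsDiagonalMap p f) (hR : ∀ i, f i ∈ R) (hinj : Set.InjOn f R)
    (hx : x ∈ stdSimplex ℝ (Fin m)) (hfix : QSO p x = x) : ∑ i ∈ R, x i = 1 := by
  set W := ∑ i ∈ R, x i with hW
  let r : Fin m → ℝ := fun i => if i ∈ R then 1 else 0
  have hr : ∑ i, r i * x i = W := by simp [r, hW, sum_ite_mem]
  have hmass : (1 + W ^ 2) / 2 ≤ W :=
    calc (1 + W ^ 2) / 2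
        = ((∑ i, x i) * (∑ j, x j) + (∑ i, r i * x i) * ∑ j, r j * x j) / 2 := by
          rw [hr, hx.2]; ring
      _ = ∑ i, ∑ j, (1 + r i * r j) / 2 * (x i * x j) := by
          simp only [sum_mul_sum, ← sum_add_distrib, sum_div]
          exact sum_congr rfl fun i _ => sum_congr rfl fun j _ => by ring
      _ ≤ ∑ i, ∑ j, (∑ k ∈ R, p i j k) * (x i * x j) :=
          sum_le_sum fun i _ => sum_le_sum fun j _ => mul_le_mul_of_nonneg_right
            (hf.half_add_le_sum_coeff hp hd hR hinj i j) (mul_nonneg (hx.1 i) (hx.1 j))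
      _ = W := by rw [← sum_QSO, hfix]
  have hsq : (1 - W) ^ 2 = 0 := (sq_nonneg _).antisymm' (by linarith)
  linarith [pow_eq_zero_iff two_ne_zero |>.mp hsq]

lemma IsDiagonalMap.eq_zero_of_fixed (hp : IsQSOCoeff p) (hd : IsDissipative p)
    (hf : IsDiagonalMap p f) (hR : ∀ i, f i ∈ R) (hinj : Set.InjOn f R)
    (hx : x ∈ stdSimplex ℝ (Fin m)) (hfix : QSO p x = x) {i : Fin m} (hi : i ∉ R) : x i = 0 := by
  have hcompl : ∑ j ∈ Rᶜ, x j = 0 := by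
    linarith [sum_add_sum_compl R x, hx.2, hf.sum_eq_one_of_fixed hp hd hR hinj hx hfix]
  exact (sum_eq_zero_iff_of_nonneg fun j _ => hx.1 j).mp hcompl i (mem_compl.mpr hi)

lemma IsDiagonalMap.QSO_eq_sum (hp : IsQSOCoeff p) (hd : IsDissipative p)
    (hf : IsDiagonalMap p f) (hinj : Set.InjOn f R) (hx : ∑ i, x i = 1)
    (hxR : ∀ i ∉ R, x i = 0) (k : Fin m) : QSO p x k = ∑ i with f i = k, x i := by
  let d : Fin m → ℝ := fun i => if f i = k then 1 else 0
  have hd_sum : ∑ i, d i * x i = ∑ i with f i = k, x i := by simp [d, sum_filter]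
  have hterm (i j : Fin m) : p i j k * x i * x j = (d i * x i * x j + x i * (d j * x j)) / 2 := by
    by_cases hi : i ∈ R
    · by_cases hj : j ∈ R
      · rw [hf.coeff_eq hp hd (hinj hi hj)]; ring
      · simp [hxR j hj]
    · simp [hxR i hi]
  simp only [QSO, hterm, ← sum_div, sum_add_distrib, ← sum_mul_sum, hx, hd_sum]
  ring

lemma IsDiagonalMap.QSO_apply_map (hp : IsQSOCoeff p) (hd : IsDissipative p)
    (hf : IsDiagonalMap p f) (hinj : Set.InjOn f R) (hx : ∑ i, x i = 1)
    (hxR : ∀ i ∉ R, x i = 0) {i : Fin m} (hi : i ∈ R) : QSO p x (f i) = x i := by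
  rw [hf.QSO_eq_sum hp hd hinj hx hxR]
  refine sum_eq_single_of_mem i (by simp) fun j hj hji => hxR j fun hjR => hji ?_
  exact hinj hjR hi (mem_filter.mp hj).2

theorem IsDiagonalMap.setOf_fixed_eq (hp : IsQSOCoeff p) (hd : IsDissipative p)
    (hf : IsDiagonalMap p f) (hR : ∀ i, f i ∈ R) (hinj : Set.InjOn f R) :
    {x ∈ stdSimplex ℝ (Fin m) | QSO p x = x} =
      {x ∈ stdSimplex ℝ (Fin m) | (∀ i ∈ R, x (f i) = x i) ∧ ∀ i ∉ R, x i = 0} := by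
  ext x
  refine and_congr_right fun hx => ⟨fun hfix => ?_, fun ⟨hinv, hxR⟩ => funext fun k => ?_⟩
  · have hxR (i) (hi : i ∉ R) : x i = 0 := hf.eq_zero_of_fixed hp hd hR hinj hx hfix hi
    exact ⟨fun i hi => by simpa only [hfix] using hf.QSO_apply_map hp hd hinj hx.2 hxR hi, hxR⟩
  · by_cases hk : k ∈ R
    · obtain ⟨i, hi, rfl⟩ := surjOn_of_injOn_of_card_le f (fun i _ => hR i) hinj le_rfl hk
      rw [hf.QSO_apply_map hp hd hinj hx.2 hxR hi, hinv i hi]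
    · rw [hf.QSO_eq_sum hp hd hinj hx.2 hxR, hxR k hk]
      exact sum_eq_zero fun i hi => absurd ((mem_filter.mp hi).2 ▸ hR i) hk

end DiagonalMap

section InvariantDistributions

variable {ι : Type*} [Fintype ι] {f : ι → ι} {R A : Finset ι}

lemma convex_setOf_invariant (f : ι → ι) (R : Finset ι) :
    Convex ℝ {x ∈ stdSimplex ℝ ι | (∀ i ∈ R, x (f i) = x i) ∧ ∀ i ∉ R, x i = 0} := by
  rintro x ⟨hx, hxf, hxR⟩ y ⟨hy, hyf, hyR⟩ a b ha hb hab
  refine ⟨convex_stdSimplex ℝ ι hx hy ha hb hab, fun i hi => ?_, fun i hi => ?_⟩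
  · simp only [Pi.add_apply, Pi.smul_apply, hxf i hi, hyf i hi]
  · simp only [Pi.add_apply, Pi.smul_apply, hxR i hi, hyR i hi, smul_zero, add_zero]

lemma centroidWeightsIndicator_mem_stdSimplex (hA : A.Nonempty) :
    A.centroidWeightsIndicator ℝ ∈ stdSimplex ℝ ι :=
  ⟨Set.indicator_nonneg fun i _ => by simp [centroidWeights_apply],
    sum_centroidWeightsIndicator_eq_one_of_nonempty ℝ A hA⟩

lemma centroidWeightsIndicator_mem_setOf_invariant (hinj : Set.InjOn f R) (hA : A.Nonempty)
    (hAR : A ⊆ R) (hAf : Set.MapsTo f A A) :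
    A.centroidWeightsIndicator ℝ ∈
      {x ∈ stdSimplex ℝ ι | (∀ i ∈ R, x (f i) = x i) ∧ ∀ i ∉ R, x i = 0} := by
  have hmem (i) (hi : i ∈ R) : f i ∈ A ↔ i ∈ A := by
    refine ⟨fun hfi => ?_, fun h => hAf h⟩
    obtain ⟨j, hj, hji⟩ := surjOn_of_injOn_of_card_le f hAf (hinj.mono hAR) le_rfl hfi
    exact hinj (hAR hj) hi hji ▸ hj
  refine ⟨centroidWeightsIndicator_mem_stdSimplex hA, fun i hi => ?_, fun i hi => ?_⟩
  · classical simp [centroidWeightsIndicator_def, Set.indicator_apply, hmem i hi]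
  · exact Set.indicator_of_notMem (fun h => hi (hAR h)) _

lemma infinite_setOf_invariant (hR : Set.MapsTo f R R) (hinj : Set.InjOn f R) (hA : A.Nonempty)
    (hAR : A ⊂ R) (hAf : Set.MapsTo f A A) :
    {x ∈ stdSimplex ℝ ι | (∀ i ∈ R, x (f i) = x i) ∧ ∀ i ∉ R, x i = 0}.Infinite := by
  refine (convex_setOf_invariant f R).isPreconnected.infinite_of_nontrivial
    ⟨_, centroidWeightsIndicator_mem_setOf_invariant hinj hA hAR.subset hAf,
      _, centroidWeightsIndicator_mem_setOf_invariant hinj (hA.mono hAR.subset) subset_rfl hR, ?_⟩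
  obtain ⟨i, hiR, hiA⟩ := exists_of_ssubset hAR
  refine Function.ne_iff.mpr ⟨i, ?_⟩
  classical simpa [centroidWeightsIndicator_def, Set.indicator_apply, hiA, hiR]
    using (Nat.cast_ne_zero (R := ℝ).mpr (card_ne_zero_of_mem hiR)).symm

end InvariantDistributions

-- `R` is a union of arbitrarily many cycles of `f`, and `A` the union of some but not all of them.
theorem stmt16_general {m : ℕ} {p : Fin m → Fin m → Fin m → ℝ} (hp : IsQSOCoeff p)
    (hd : IsDissipative p) {f : Fin m → Fin m} (hf : IsDiagonalMap p f) {R A : Finset (Fin m)}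
    (hR : ∀ i, f i ∈ R) (hinj : Set.InjOn f R) (hA : A.Nonempty) (hAR : A ⊂ R)
    (hAf : Set.MapsTo f A A) :
    {x ∈ stdSimplex ℝ (Fin m) | QSO p x = x} =
      {x ∈ stdSimplex ℝ (Fin m) | (∀ i ∈ R, x (f i) = x i) ∧ ∀ i ∉ R, x i = 0} ∧
    {x ∈ stdSimplex ℝ (Fin m) | QSO p x = x}.Infinite := by
  have heq := hf.setOf_fixed_eq hp hd hR hinj
  exact ⟨heq, heq ▸ infinite_setOf_invariant (fun i _ => hR i) hinj hA hAR hAf⟩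

section TwoCycles

/-- The first `n` indices in `Fin m`; for a map with two consecutive cycles, both the first cycle
and the union of the two cycles have this form. -/
def firstIndices (m n : ℕ) : Finset (Fin m) := {i | (i : ℕ) < n}

lemma mem_firstIndices {m n : ℕ} {i : Fin m} : i ∈ firstIndices m n ↔ (i : ℕ) < n :=
  mem_filter_univ i

lemma firstIndices_nonempty {m n : ℕ} (hn : 0 < n) (hnm : n ≤ m) : (firstIndices m n).Nonempty :=
  ⟨⟨0, hn.trans_le hnm⟩, mem_firstIndices.mpr hn⟩

lemma firstIndices_ssubset {m n₁ n₂ : ℕ} (h : n₁ < n₂) (hm : n₂ ≤ m) :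
    firstIndices m n₁ ⊂ firstIndices m n₂ := by
  refine ssubset_iff_of_subset (fun i hi => ?_) |>.mpr ⟨⟨n₁, by omega⟩, ?_, ?_⟩
  · exact mem_firstIndices.mpr ((mem_firstIndices.mp hi).trans h)
  · exact mem_firstIndices.mpr h
  · exact fun hmem => lt_irrefl n₁ (mem_firstIndices.mp hmem)

/-- `f` permutes `{0, …, n₂ - 1}` by the two backward cycles `n₁ - 1 → ⋯ → 0 → n₁ - 1` and
`n₂ - 1 → ⋯ → n₁ → n₂ - 1`, and sends all other indices into this set.  It serves
as the diagonal map of an operator with two cycles of vertices; values are specified through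
successors so that no truncated subtraction occurs. -/
structure IsTwoCycle {m : ℕ} (n₁ n₂ : ℕ) (f : Fin m → Fin m) : Prop where
  map_lt : ∀ i, (f i : ℕ) < n₂
  map_of_eq_zero : ∀ i : Fin m, (i : ℕ) = 0 → (f i : ℕ) + 1 = n₁
  map_of_eq_left : ∀ i : Fin m, (i : ℕ) = n₁ → (f i : ℕ) + 1 = n₂
  map_of_ne : ∀ i : Fin m, (i : ℕ) < n₂ → (i : ℕ) ≠ 0 → (i : ℕ) ≠ n₁ → (f i : ℕ) + 1 = i

variable {m n₁ n₂ : ℕ} {f : Fin m → Fin m}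

lemma IsDiagonalMap.isTwoCycle {p : Fin m → Fin m → Fin m → ℝ} (hp : IsQSOCoeff p)
    (hf : IsDiagonalMap p f) (h₁ : 0 < n₁) (h₂ : n₁ < n₂) (hm : n₂ ≤ m)
    (hstep : ∀ j : ℕ, ∀ hj : j + 1 < n₁ ∨ (n₁ ≤ j ∧ j + 1 < n₂),
      p ⟨j + 1, by omega⟩ ⟨j + 1, by omega⟩ ⟨j, by omega⟩ = 1)
    (hzero : p ⟨0, by omega⟩ ⟨0, by omega⟩ ⟨n₁ - 1, by omega⟩ = 1)
    (hleft : p ⟨n₁, by omega⟩ ⟨n₁, by omega⟩ ⟨n₂ - 1, by omega⟩ = 1)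
    (hlt : ∀ k : ℕ, n₂ ≤ k → ∀ hk : k < m, ∀ i : Fin m, p i i ⟨k, hk⟩ ≠ 1) :
    IsTwoCycle n₁ n₂ f where
  map_lt i := not_le.mp fun hi => hlt _ hi (f i).2 i (hf i)
  map_of_eq_zero := by
    rintro ⟨_, _⟩ rfl
    rw [hf.eq_of_coeff_eq_one hp hzero]
    exact Nat.sub_add_cancel h₁
  map_of_eq_left := by
    rintro ⟨_, _⟩ rfl
    rw [hf.eq_of_coeff_eq_one hp hleft]
    exact Nat.sub_add_cancel (by omega)
  map_of_ne := by
    rintro ⟨_ | j, _⟩ hi hi₀ hi₁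
    · exact absurd rfl hi₀
    · rw [hf.eq_of_coeff_eq_one hp (hstep j (by simp only at hi hi₁; omega))]

lemma IsTwoCycle.injOn_firstIndices (hf : IsTwoCycle n₁ n₂ f) :
    Set.InjOn f (firstIndices m n₂) := by
  intro i hi j hj hij
  rw [mem_coe, mem_firstIndices] at hi hj
  have : (f i : ℕ) = f j := congrArg Fin.val hij
  have := hf.map_of_eq_zero i
  have := hf.map_of_eq_zero j
  have := hf.map_of_eq_left i
  have := hf.map_of_eq_left j
  have := hf.map_of_ne i hi
  have := hf.map_of_ne j hj
  exact Fin.ext (by omega)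

lemma IsTwoCycle.map_lt_left_iff (hf : IsTwoCycle n₁ n₂ f) (h : n₁ < n₂)
    {i : Fin m} (hi : (i : ℕ) < n₂) : (f i : ℕ) < n₁ ↔ (i : ℕ) < n₁ := by
  have := hf.map_of_eq_zero i
  have := hf.map_of_eq_left i
  have := hf.map_of_ne i hi
  omega

lemma IsTwoCycle.mapsTo_firstIndices (hf : IsTwoCycle n₁ n₂ f) (h : n₁ < n₂) :
    Set.MapsTo f (firstIndices m n₁) (firstIndices m n₁) := fun _ hi =>
  have hi := mem_firstIndices.mp hi
  mem_firstIndices.mpr ((hf.map_lt_left_iff h (hi.trans h)).mpr hi)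

lemma eq_of_forall_succ_eq {α : Type*} {x : Fin m → α} {a b : ℕ}
    (hsucc : ∀ i j : Fin m, a ≤ (i : ℕ) → (i : ℕ) + 1 = j → (j : ℕ) < b → x i = x j)
    {i j : Fin m} (hai : a ≤ (i : ℕ)) (hib : (i : ℕ) < b) (haj : a ≤ (j : ℕ))
    (hjb : (j : ℕ) < b) : x i = x j := by
  wlog hij : i ≤ j generalizing i j
  · exact (this haj hjb hai hib (le_of_not_ge hij)).symm
  obtain ⟨d, hd⟩ := Nat.exists_eq_add_of_le (Fin.le_def.mp hij)
  clear hij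
  induction d generalizing j with
  | zero => rw [Fin.ext hd]
  | succ d ih =>
    let k : Fin m := ⟨i + d, by omega⟩
    have hik : x i = x k := ih (Nat.le_add_right_of_le hai) (show i + d < b by omega) rfl
    exact hik.trans (hsucc k j (Nat.le_add_right_of_le hai) hd.symm hjb)

lemma IsTwoCycle.forall_map_eq_iff (hf : IsTwoCycle n₁ n₂ f) (h : n₁ < n₂) {α : Type*}
    {x : Fin m → α} :
    (∀ i : Fin m, (i : ℕ) < n₂ → x (f i) = x i) ↔
      (∀ i j : Fin m, (i : ℕ) < n₁ → (j : ℕ) < n₁ → x i = x j) ∧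
      ∀ i j : Fin m, n₁ ≤ (i : ℕ) → (i : ℕ) < n₂ → n₁ ≤ (j : ℕ) → (j : ℕ) < n₂ → x i = x j := by
  constructor
  · intro hinv
    have hsucc (i j : Fin m) (hij : (i : ℕ) + 1 = j) (hj : (j : ℕ) < n₂) (hj₁ : (j : ℕ) ≠ n₁) :
        x i = x j := by
      have hfj : f j = i := Fin.ext (by have := hf.map_of_ne j hj (by omega) hj₁; omega)
      rw [← hinv j hj, hfj]
    exact ⟨fun i j hi hj => eq_of_forall_succ_eq
        (fun i j _ hij hj => hsucc i j hij (by omega) hj.ne) i.val.zero_le hi j.val.zero_le hj,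
      fun i j hi hi₂ hj hj₂ => eq_of_forall_succ_eq
        (fun i j hi hij hj => hsucc i j hij hj (by omega)) hi hi₂ hj hj₂⟩
  · rintro ⟨hfst, hsnd⟩ i hi
    by_cases hi₁ : (i : ℕ) < n₁
    · exact hfst _ _ ((hf.map_lt_left_iff h hi).mpr hi₁) hi₁
    · exact hsnd _ _ (not_lt.mp fun hlt => hi₁ ((hf.map_lt_left_iff h hi).mp hlt)) (hf.map_lt i)
        (not_lt.mp hi₁) hi

end TwoCycles

/-- Case 1, two cycles: a dissipative q.s.o. whose diagonal data consist
of two backward cycles on `{1,…,n₁}` and `{n₁+1,…,n₂}` (1-based), with no `i` satisfying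
`p_{ii,k} = 1` for `k > n₂`, has fixed point set
`{x : x₁ = ⋯ = x_{n₁}, x_{n₁+1} = ⋯ = x_{n₂}, x_i = 0 for i > n₂}`, which is infinite.
(0-based indexing in the formalization.) -/
theorem stmt16 {m n₁ n₂ : ℕ} (hn₁ : 2 ≤ n₁) (hn₂ : n₁ + 2 ≤ n₂) (hm : n₂ ≤ m)
    (p : Fin m → Fin m → Fin m → ℝ)
    (hp : IsQSOCoeff p) (hd : IsDissipative p)
    (hc : ∀ j : ℕ, ∀ hj : j + 1 < n₁ ∨ (n₁ ≤ j ∧ j + 1 < n₂),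
      p ⟨j + 1, by omega⟩ ⟨j + 1, by omega⟩ ⟨j, by omega⟩ = 1)
    (hc1 : p ⟨0, by omega⟩ ⟨0, by omega⟩ ⟨n₁ - 1, by omega⟩ = 1)
    (hc2 : p ⟨n₁, by omega⟩ ⟨n₁, by omega⟩ ⟨n₂ - 1, by omega⟩ = 1)
    (hc3 : ∀ k : ℕ, n₂ ≤ k → ∀ hk : k < m, ∀ i : Fin m, p i i ⟨k, hk⟩ ≠ 1) :
    {x ∈ stdSimplex ℝ (Fin m) | QSO p x = x} =
      {x ∈ stdSimplex ℝ (Fin m) |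
        (∀ i j : Fin m, (i : ℕ) < n₁ → (j : ℕ) < n₁ → x i = x j) ∧
        (∀ i j : Fin m, n₁ ≤ (i : ℕ) → (i : ℕ) < n₂ → n₁ ≤ (j : ℕ) → (j : ℕ) < n₂ →
          x i = x j) ∧
        ∀ i : Fin m, n₂ ≤ (i : ℕ) → x i = 0} ∧
    {x ∈ stdSimplex ℝ (Fin m) | QSO p x = x}.Infinite := by
  obtain ⟨f, hf⟩ := hd.exists_isDiagonalMap hp
  have h₁₂ : n₁ < n₂ := by omega
  have hcyc : IsTwoCycle n₁ n₂ f := hf.isTwoCycle hp (by omega) h₁₂ hm hc hc1 hc2 hc3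
  simpa only [mem_firstIndices, hcyc.forall_map_eq_iff h₁₂, not_lt, and_assoc] using
    stmt16_general hp hd hf (fun i => mem_firstIndices.mpr (hcyc.map_lt i))
      hcyc.injOn_firstIndices (firstIndices_nonempty (by omega) (by omega))
      (firstIndices_ssubset h₁₂ hm) (hcyc.mapsTo_firstIndices h₁₂)
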